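/- Let γ : [0,a] → M be a g*-geodesic with γ(0) ∈ V⁻¹(E), γ((0,a]) ⊂ Ω_E, parameterized by arc length, i.e. ½ g(γ̇,γ̇)(E−V(γ)) ≡ 1. Then there exists a positive constant C₀ such that γ̇(s)/‖γ̇(s)‖ = −∇V(γ(s))/‖∇V(γ(s))‖ + Σ(s) with ‖Σ(s)‖ ≤ C₀ s^{1/3} for all s ∈ (0,a]. -/

import Mathlib

open MeasureTheory Set Matrix Filter Topology

namespace JacobiPaper

noncomputable section

/-- Points/vectors of the ambient space `ℝ^N` in which the manifold `M` is
topologically embedded as an open subset. -/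
abbrev Vec (N : ℕ) := Fin N → ℝ

variable {N : ℕ}

/-- The inner product determined by a field of matrices `g` at the point `x`. -/
def gP (g : Vec N → Matrix (Fin N) (Fin N) ℝ) (x v w : Vec N) : ℝ :=
  ∑ i, ∑ j, g x i j * v i * w j

/-- The Euclidean gradient (the differential, as a vector). -/
def euclGrad (V : Vec N → ℝ) (x : Vec N) : Vec N :=
  fun i => fderiv ℝ V x (Pi.single i 1)

/-- The setting of the paper: a `C³` Riemannian metric `g` on a neighborhood `U` of
the compact sublevel `V⁻¹((-∞,E])`, with `V` of class `C²` there and `E` a regular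
value of `V`. -/
structure Setting (N : ℕ) where
  g : Vec N → Matrix (Fin N) (Fin N) ℝ
  V : Vec N → ℝ
  E : ℝ
  U : Set (Vec N)
  hdim : 1 ≤ N
  hU : IsOpen U
  hsub : {x | V x ≤ E} ⊆ U
  hgC : ∀ i j, ContDiffOn ℝ 3 (fun x => g x i j) U
  hgsymm : ∀ x ∈ U, ∀ i j, g x i j = g x j i
  hgpos : ∀ x ∈ U, ∀ v : Vec N, v ≠ 0 → 0 < gP g x v v
  hVC : ContDiffOn ℝ 2 V U
  hreg : ∀ x, V x = E → euclGrad V x ≠ 0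
  hcomp : IsCompact {x : Vec N | V x ≤ E}

namespace Setting

variable (S : Setting N)

/-- The Riemannian inner product `g_x(v,w)`. -/
def prod (x v w : Vec N) : ℝ := gP S.g x v w

/-- The Riemannian norm `‖v‖_x`. -/
def gnorm (x v : Vec N) : ℝ := Real.sqrt (S.prod x v v)

/-- The gradient of `V` with respect to `g`. -/
def grad (x : Vec N) : Vec N := (S.g x)⁻¹ *ᵥ euclGrad S.V x

/-- Christoffel symbols `Γ^k_{ij}` of the Levi-Civita connection of `g`. -/
def christoffel (x : Vec N) (k i j : Fin N) : ℝ :=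
  (1/2) * ∑ l, (S.g x)⁻¹ k l *
    (fderiv ℝ (fun y => S.g y l j) x (Pi.single i 1)
     + fderiv ℝ (fun y => S.g y l i) x (Pi.single j 1)
     - fderiv ℝ (fun y => S.g y i j) x (Pi.single l 1))

/-- Covariant derivative, along the curve `q` with velocity `q'`, of the vector field
`ξ` whose (pointwise) derivative is `ξ'`. -/
def covD (q q' ξ ξ' : ℝ → Vec N) (s : ℝ) : Vec N :=
  fun k => ξ' s k + ∑ i, ∑ j, S.christoffel (q s) k i j * q' s i * ξ s j

/-- The Riemann curvature tensor `R(u,v)w` of `g` at `x`. -/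
def curv (x u v w : Vec N) : Vec N :=
  fun l => ∑ i, ∑ j, ∑ k, u i * v j * w k *
    (fderiv ℝ (fun y => S.christoffel y l j k) x (Pi.single i 1)
     - fderiv ℝ (fun y => S.christoffel y l i k) x (Pi.single j 1)
     + ∑ m, (S.christoffel x l i m * S.christoffel x m j k
             - S.christoffel x l j m * S.christoffel x m i k))

/-- The Hessian operator of `V` with respect to `g`: `ξ ↦ ∇_ξ ∇V`. -/
def hessV (x ξ : Vec N) : Vec N :=
  fun k => ∑ i, ξ i * (fderiv ℝ (fun y => S.grad y k) x (Pi.single i 1)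
    + ∑ j, S.christoffel x k i j * S.grad x j)

/-- The Jacobi-metric geodesic equation (eq. (2.5) of the paper) at the instant `s`,
for a curve `x` with derivative `x'` and second derivative `x''`. -/
def GeoEqAt (x x' x'' : ℝ → Vec N) (s : ℝ) : Prop :=
  ∀ k, (S.E - S.V (x s)) * S.covD x x' x' x'' s k
    - S.prod (x s) (S.grad (x s)) (x' s) * x' s k
    + (1/2) * S.prod (x s) (x' s) (x' s) * S.grad (x s) k = 0

end Setting

/-- `q` is of class `C²` on `I` with first derivative `q'` and second derivative `q''`. -/
def C2OnWith (q q' q'' : ℝ → Vec N) (I : Set ℝ) : Prop :=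
  (∀ t ∈ I, HasDerivWithinAt q (q' t) I t) ∧
  (∀ t ∈ I, HasDerivWithinAt q' (q'' t) I t) ∧
  ContinuousOn q'' I

/-- `x` belongs to the Sobolev space `H¹([a,b],ℝ^N)`: it is absolutely continuous
(primitive of its a.e. derivative) with square-integrable derivative. -/
def H1On (x : ℝ → Vec N) (a b : ℝ) : Prop :=
  ContinuousOn x (Icc a b) ∧
  IntegrableOn (deriv x) (Icc a b) ∧
  IntegrableOn (fun s => ‖deriv x s‖ ^ 2) (Icc a b) ∧
  ∀ t ∈ Icc a b, x t = x a + ∫ s in a..t, deriv x s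

/-- `x` is absolutely continuous on `[a,b]`. -/
def ACOn (x : ℝ → Vec N) (a b : ℝ) : Prop :=
  ContinuousOn x (Icc a b) ∧
  IntegrableOn (deriv x) (Icc a b) ∧
  ∀ t ∈ Icc a b, x t = x a + ∫ s in a..t, deriv x s

namespace Setting

variable (S : Setting N)

/-- The weak (distributional) form (eq. (2.7)) of the Jacobi geodesic equation on `(a,b)`,
tested against all `ξ ∈ C^∞_0((a,b),ℝ^N)`. -/
def WeakGeo (x : ℝ → Vec N) (a b : ℝ) : Prop :=
  ∀ ξ : ℝ → Vec N, ContDiff ℝ (⊤ : ℕ∞) ξ → tsupport ξ ⊆ Ioo a b →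
    (∫ s in a..b,
      ((S.E - S.V (x s)) * S.prod (x s) (deriv x s) (S.covD x (deriv x) ξ (deriv ξ) s)
        - (1/2) * S.prod (x s) (deriv x s) (deriv x s)
            * S.prod (x s) (S.grad (x s)) (ξ s))) = 0

/-- The space `X_Q`. -/
def InXQ (Q : Vec N) (x : ℝ → Vec N) : Prop :=
  H1On x 0 1 ∧ S.V (x 0) = S.E ∧ (∀ s ∈ Ioc (0:ℝ) 1, S.V (x s) < S.E) ∧ x 1 = Q

/-- The Jacobi length functional `L_V`. -/
def LV (x : ℝ → Vec N) : ℝ :=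
  ∫ s in (0:ℝ)..1,
    Real.sqrt ((1/2) * (S.E - S.V (x s)) * S.prod (x s) (deriv x s) (deriv x s))

/-- The distance `d_V(Q)` from `Q` to the boundary of the potential well. -/
def dV (Q : Vec N) : ℝ := sInf {r | ∃ x, S.InXQ Q x ∧ r = S.LV x}

/-- `γ : [0,a] → M` is a `g_*`-geodesic starting at `V⁻¹(E)`, staying in the potential
well for `s > 0`, parameterized by arc length (`½ g(γ̇,γ̇)(E−V(γ)) ≡ 1`). -/
def IsBdryGeo (γ : ℝ → Vec N) (a : ℝ) : Prop :=
  0 < a ∧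
  ContinuousOn γ (Icc 0 a) ∧
  (∀ s ∈ Ioc (0:ℝ) a, ContDiffAt ℝ 2 γ s) ∧
  S.V (γ 0) = S.E ∧
  (∀ s ∈ Ioc (0:ℝ) a, S.V (γ s) < S.E) ∧
  (∀ s ∈ Ioc (0:ℝ) a, S.GeoEqAt γ (deriv γ) (deriv (deriv γ)) s) ∧
  (∀ s ∈ Ioc (0:ℝ) a, (1/2) * S.prod (γ s) (deriv γ s) (deriv γ s) * (S.E - S.V (γ s)) = 1)

/-- The index form `I_{s₁,s₂}(ξ,η)` along `γ`. -/
def idxForm (γ : ℝ → Vec N) (s₁ s₂ : ℝ) (ξ η : ℝ → Vec N) : ℝ :=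
  ∫ u in s₁..s₂,
    ((S.E - S.V (γ u)) *
        (S.prod (γ u) (S.covD γ (deriv γ) ξ (deriv ξ) u) (S.covD γ (deriv γ) η (deriv η) u)
          + S.prod (γ u) (S.curv (γ u) (deriv γ u) (ξ u) (deriv γ u)) (η u))
      - (S.prod (γ u) (S.grad (γ u)) (ξ u)
            * S.prod (γ u) (deriv γ u) (S.covD γ (deriv γ) η (deriv η) u)
          + S.prod (γ u) (deriv γ u) (S.covD γ (deriv γ) ξ (deriv ξ) u)
            * S.prod (γ u) (S.grad (γ u)) (η u)
          + (1/2) * S.prod (γ u) (S.hessV (γ u) (ξ u)) (η u)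
            * S.prod (γ u) (deriv γ u) (deriv γ u)))

/-- Membership in the space `Y_s^W`: absolutely continuous vector fields along `γ|[0,s]`
with finite weighted norm, with `ξ(0) ∈ T_{γ(0)}V⁻¹(E)` and `ξ(s) = W`. -/
def InY (γ : ℝ → Vec N) (s : ℝ) (W : Vec N) (ξ : ℝ → Vec N) : Prop :=
  ACOn ξ 0 s ∧
  IntegrableOn (fun u => (S.E - S.V (γ u)) *
      S.prod (γ u) (S.covD γ (deriv γ) ξ (deriv ξ) u)
        (S.covD γ (deriv γ) ξ (deriv ξ) u)) (Icc 0 s) ∧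
  S.prod (γ 0) (S.grad (γ 0)) (ξ 0) = 0 ∧
  ξ s = W

/-- The weighted squared norm `⟨ξ,ξ⟩_{0,s}`. -/
def wNormSq (γ : ℝ → Vec N) (s : ℝ) (ξ : ℝ → Vec N) : ℝ :=
  ∫ u in (0:ℝ)..s, (S.E - S.V (γ u)) *
    S.prod (γ u) (S.covD γ (deriv γ) ξ (deriv ξ) u) (S.covD γ (deriv γ) ξ (deriv ξ) u)

/-- The Jacobi field equation (eq. (4.9)) at the instant `u`. -/
def JacobiEqAt (γ ξ : ℝ → Vec N) (u : ℝ) : Prop :=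
  ∀ k, - deriv (fun t => (S.E - S.V (γ t)) * S.covD γ (deriv γ) ξ (deriv ξ) t k) u
      + (S.E - S.V (γ u)) * S.curv (γ u) (deriv γ u) (ξ u) (deriv γ u) k
      + deriv (fun t => S.prod (γ t) (S.grad (γ t)) (ξ t) * deriv γ t k) u
      - S.prod (γ u) (deriv γ u) (S.covD γ (deriv γ) ξ (deriv ξ) u) * S.grad (γ u) k
      - (1/2) * S.prod (γ u) (deriv γ u) (deriv γ u) * S.hessV (γ u) (ξ u) k = 0

/-- `ξ` is a Jacobi field along `γ|[0,s]`: of class `C⁰([0,s]) ∩ C²((0,s])` and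
solving the Jacobi equation on `(0,s]`. -/
def IsJacobi (γ ξ : ℝ → Vec N) (s : ℝ) : Prop :=
  ContinuousOn ξ (Icc 0 s) ∧ (∀ u ∈ Ioc (0:ℝ) s, ContDiffAt ℝ 2 ξ u) ∧
  ∀ u ∈ Ioc (0:ℝ) s, S.JacobiEqAt γ ξ u

/-- The boundary condition (eq. (4.10)): the continuous extension at `s = 0` of
`(E−V(γ))Dξ/ds − g(∇V(γ),ξ)γ̇` is parallel to `∇V(γ(0))`. -/
def BdryCond (γ ξ : ℝ → Vec N) : Prop :=
  ∃ c : ℝ, Tendsto (fun u => (fun k => (S.E - S.V (γ u)) * S.covD γ (deriv γ) ξ (deriv ξ) u k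
      - S.prod (γ u) (S.grad (γ u)) (ξ u) * deriv γ u k))
    (nhdsWithin 0 (Ioi 0)) (nhds (c • S.grad (γ 0)))

end Setting

/-- The family `ξ : Fin n → (ℝ → Vec N)` is linearly independent as fields on `I`. -/
def IndepOn {n : ℕ} (I : Set ℝ) (ξ : Fin n → ℝ → Vec N) : Prop :=
  ∀ c : Fin n → ℝ, (∀ u ∈ I, (∑ i, c i • ξ i) u = 0) → c = 0

/-- The index of the quadratic form `B` on the class `C` of vector fields (regarded as
fields on `I`) is at least `n`. -/
def IndexGe {N : ℕ} (B : (ℝ → Vec N) → ℝ) (C : (ℝ → Vec N) → Prop) (I : Set ℝ) (n : ℕ) : Prop :=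
  ∃ ξ : Fin n → ℝ → Vec N, (∀ i, C (ξ i)) ∧ IndepOn I ξ ∧
    ∀ c : Fin n → ℝ, c ≠ 0 → B (∑ i, c i • ξ i) < 0

/-- The index of the quadratic form `B` on the class `C` equals `n`. -/
def IndexEq {N : ℕ} (B : (ℝ → Vec N) → ℝ) (C : (ℝ → Vec N) → Prop) (I : Set ℝ) (n : ℕ) : Prop :=
  IndexGe B C I n ∧ ¬ IndexGe B C I (n+1)

/-- The nullity of a bilinear form `B` on the class `C` is at least `n`. -/
def NullGe {N : ℕ} (B : (ℝ → Vec N) → (ℝ → Vec N) → ℝ) (C : (ℝ → Vec N) → Prop)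
    (I : Set ℝ) (n : ℕ) : Prop :=
  ∃ ξ : Fin n → ℝ → Vec N, (∀ i, C (ξ i)) ∧ IndepOn I ξ ∧
    ∀ i, ∀ η, C η → B (ξ i) η = 0

/-- The nullity of a bilinear form `B` on the class `C` equals `n`. -/
def NullEq {N : ℕ} (B : (ℝ → Vec N) → (ℝ → Vec N) → ℝ) (C : (ℝ → Vec N) → Prop)
    (I : Set ℝ) (n : ℕ) : Prop :=
  NullGe B C I n ∧ ¬ NullGe B C I (n+1)

namespace Setting

variable (S : Setting N)

/-- `ξ` is a (nontrivial candidate) field realizing conjugacy at `γ(s)`: a Jacobi field in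
`Y_s` satisfying the boundary condition (4.10). -/
def ConjField (γ : ℝ → Vec N) (s : ℝ) (ξ : ℝ → Vec N) : Prop :=
  S.InY γ s 0 ξ ∧ S.IsJacobi γ ξ s ∧ S.BdryCond γ ξ

/-- `γ(s)` is conjugate to `V⁻¹(E)` with multiplicity at least `n`. -/
def MultGe (γ : ℝ → Vec N) (s : ℝ) (n : ℕ) : Prop :=
  ∃ ξ : Fin n → ℝ → Vec N, (∀ i, S.ConjField γ s (ξ i)) ∧ IndepOn (Icc 0 s) ξ

/-- `γ(s)` is conjugate to `V⁻¹(E)`. -/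
def IsConj (γ : ℝ → Vec N) (s : ℝ) : Prop := S.MultGe γ s 1

/-- `γ(s)` is conjugate to `V⁻¹(E)` with multiplicity exactly `n`. -/
def Mult (γ : ℝ → Vec N) (s : ℝ) (n : ℕ) : Prop :=
  S.MultGe γ s n ∧ ¬ S.MultGe γ s (n+1)

end Setting

/-!
Write `w = E - V(γ)`, so that `‖γ̇‖² = 2 / w`, and put `P = ‖∇V(γ)‖²` and `f = -w dV(γ̇)`. The
geodesic equation becomes the singular system `w' = f / w`, `f' = h / w`, where
`h = P - w² Hess V(γ̇, γ̇) = P + O(w)`, and `w` and `f` vanish at `s = 0`. Comparing derivatives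
gives first `f² ≥ 2 m w` for every `m < ‖∇V(γ(0))‖²`, which bounds `w P'` by a multiple of `f`,
and then `f² ≥ 2 w P - A w²`. Since `f² / (2 w P)` is the squared cosine of the angle between
`γ̇` and `-∇V`, this says `‖Σ‖² = O(w)`. Finally `f² ≤ 2 w P`, by Cauchy-Schwarz, bounds
`(w^{3/2})' = (3 / 2) f / √w`, so `√w = O(s^{1/3})`.
-/

section Comparison

variable {t₀ : ℝ}

theorem eventually_le_of_hasDerivAt_le {φ φ' ψ ψ' : ℝ → ℝ} {L : ℝ}
    (hφ : ∀ᶠ s in 𝓝[>] t₀, HasDerivAt φ (φ' s) s) (hψ : ∀ᶠ s in 𝓝[>] t₀, HasDerivAt ψ (ψ' s) s)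
    (hle : ∀ᶠ s in 𝓝[>] t₀, φ' s ≤ ψ' s)
    (hφ₀ : Tendsto φ (𝓝[>] t₀) (𝓝 L)) (hψ₀ : Tendsto ψ (𝓝[>] t₀) (𝓝 L)) :
    ∀ᶠ s in 𝓝[>] t₀, φ s ≤ ψ s := by
  obtain ⟨δ, hδ, h⟩ := mem_nhdsGT_iff_exists_Ioo_subset.1 (hφ.and (hψ.and hle))
  have hderiv (s) (hs : s ∈ Ioo t₀ δ) : HasDerivAt (ψ - φ) (ψ' s - φ' s) s :=
    (h hs).2.1.sub (h hs).1
  have hmono : MonotoneOn (ψ - φ) (Ioo t₀ δ) := by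
    refine monotoneOn_of_deriv_nonneg (convex_Ioo t₀ δ)
      (fun s hs => (hderiv s hs).continuousAt.continuousWithinAt)
      (fun s hs => (hderiv s (interior_subset hs)).differentiableAt.differentiableWithinAt)
      fun s hs => ?_
    rw [(hderiv s (interior_subset hs)).deriv]
    exact sub_nonneg.2 (h (interior_subset hs)).2.2
  have hlim : Tendsto (ψ - φ) (𝓝[>] t₀) (𝓝 0) := sub_self L ▸ hψ₀.sub hφ₀
  filter_upwards [Ioo_mem_nhdsGT hδ] with s hs
  refine sub_nonneg.1 (le_of_tendsto hlim ?_)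
  filter_upwards [Ioo_mem_nhdsGT hs.1] with r hr
  exact hmono ⟨hr.1, hr.2.trans hs.2⟩ hs hr.2.le

theorem exists_forall_le_mul_rpow {F : ℝ → ℝ} {a p M : ℝ} (hp : 0 ≤ p)
    (hnear : ∃ C : ℝ, ∀ᶠ s in 𝓝[>] 0, F s ≤ C * s ^ p) (hM : ∀ s ∈ Ioc 0 a, F s ≤ M) :
    ∃ C > 0, ∀ s ∈ Ioc 0 a, F s ≤ C * s ^ p := by
  obtain ⟨C, hC⟩ := hnear
  obtain ⟨δ, hδ, hδC⟩ := mem_nhdsGT_iff_exists_Ioc_subset.1 hC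
  replace hδ : 0 < δ := hδ
  refine ⟨|C| + |M| / δ ^ p + 1, by positivity, fun s hs => ?_⟩
  have hs₀ : 0 < s := hs.1
  suffices F s ≤ |C| * s ^ p + |M| / δ ^ p * s ^ p by
    linarith [Real.rpow_nonneg hs₀.le p]
  rcases le_total s δ with hsδ | hδs
  · have hFC : F s ≤ C * s ^ p := hδC ⟨hs₀, hsδ⟩
    have hCabs : C * s ^ p ≤ |C| * s ^ p := by gcongr; exact le_abs_self C
    have : 0 ≤ |M| / δ ^ p * s ^ p := by positivity
    linarith
  · have hMabs : |M| ≤ |M| / δ ^ p * s ^ p := by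
      rw [div_mul_eq_mul_div, le_div_iff₀ (by positivity)]
      gcongr
    have : 0 ≤ |C| * s ^ p := by positivity
    linarith [hM s hs, le_abs_self M]

theorem le_rpow_inv_of_pow_le {x y : ℝ} {n : ℕ} (hn : n ≠ 0) (hx : 0 ≤ x) (h : x ^ n ≤ y) :
    x ≤ y ^ ((n : ℝ)⁻¹) := by
  rw [← Real.pow_rpow_inv_natCast hx hn]
  exact Real.rpow_le_rpow (pow_nonneg hx n) h (by positivity)

end Comparison

/-! ### The singular system `w' = f / w`, `f' = h / w` -/

section SingularSystem

variable {w f h : ℝ → ℝ} {t₀ : ℝ}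

theorem eventually_nonneg_of_hasDerivAt_div
    (hw : ∀ᶠ s in 𝓝[>] t₀, 0 < w s) (hh : ∀ᶠ s in 𝓝[>] t₀, 0 ≤ h s)
    (hf' : ∀ᶠ s in 𝓝[>] t₀, HasDerivAt f (h s / w s) s) (hf₀ : Tendsto f (𝓝[>] t₀) (𝓝 0)) :
    ∀ᶠ s in 𝓝[>] t₀, 0 ≤ f s := by
  refine eventually_le_of_hasDerivAt_le (.of_forall fun s => hasDerivAt_const s (0 : ℝ)) hf' ?_
    tendsto_const_nhds hf₀
  filter_upwards [hw, hh] with s hws hhs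
  positivity

theorem eventually_two_mul_mul_le_sq {m : ℝ} (hw : ∀ᶠ s in 𝓝[>] t₀, 0 < w s)
    (hh : ∀ᶠ s in 𝓝[>] t₀, m ≤ h s) (hf : ∀ᶠ s in 𝓝[>] t₀, 0 ≤ f s)
    (hw' : ∀ᶠ s in 𝓝[>] t₀, HasDerivAt w (f s / w s) s)
    (hf' : ∀ᶠ s in 𝓝[>] t₀, HasDerivAt f (h s / w s) s)
    (hw₀ : Tendsto w (𝓝[>] t₀) (𝓝 0)) (hf₀ : Tendsto f (𝓝[>] t₀) (𝓝 0)) :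
    ∀ᶠ s in 𝓝[>] t₀, 2 * m * w s ≤ f s ^ 2 := by
  refine eventually_le_of_hasDerivAt_le (φ' := fun s => 2 * m * (f s / w s))
    (ψ' := fun s => 2 * h s * (f s / w s)) (hw'.mono fun s hs => hs.const_mul _) ?_ ?_
    (by simpa using hw₀.const_mul (2 * m)) (by simpa using hf₀.pow 2)
  · filter_upwards [hf'] with s hs
    exact (hs.fun_pow 2).congr_deriv (by push_cast; ring)
  · filter_upwards [hw, hh, hf] with s hws hhs hfs
    gcongr

theorem mul_le_sqrt_mul_of_sq_le {w f p m C : ℝ} (hm : 0 < m) (hw : 0 ≤ w) (hf : 0 ≤ f)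
    (hp : w * p ^ 2 ≤ C) (hwf : 2 * m * w ≤ f ^ 2) : w * p ≤ √(C / (2 * m)) * f := by
  have hC : 0 ≤ C := (by positivity : 0 ≤ w * p ^ 2).trans hp
  refine (abs_le_of_sq_le_sq' ?_ (by positivity)).2
  calc (w * p) ^ 2 = w * (w * p ^ 2) := by ring
    _ ≤ w * C := by gcongr
    _ = C / (2 * m) * (2 * m * w) := by field_simp
    _ ≤ C / (2 * m) * f ^ 2 := by gcongr
    _ = (√(C / (2 * m)) * f) ^ 2 := by rw [mul_pow, Real.sq_sqrt (by positivity)]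

theorem eventually_two_mul_mul_sub_le_sq {P P' : ℝ → ℝ} {B K P₀ : ℝ}
    (hw : ∀ᶠ s in 𝓝[>] t₀, 0 < w s) (hf : ∀ᶠ s in 𝓝[>] t₀, 0 ≤ f s)
    (hPh : ∀ᶠ s in 𝓝[>] t₀, P s - B * w s ≤ h s)
    (hP'f : ∀ᶠ s in 𝓝[>] t₀, w s * P' s ≤ K * f s)
    (hw' : ∀ᶠ s in 𝓝[>] t₀, HasDerivAt w (f s / w s) s)
    (hf' : ∀ᶠ s in 𝓝[>] t₀, HasDerivAt f (h s / w s) s)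
    (hP' : ∀ᶠ s in 𝓝[>] t₀, HasDerivAt P (P' s) s)
    (hw₀ : Tendsto w (𝓝[>] t₀) (𝓝 0)) (hf₀ : Tendsto f (𝓝[>] t₀) (𝓝 0))
    (hP₀ : Tendsto P (𝓝[>] t₀) (𝓝 P₀)) :
    ∀ᶠ s in 𝓝[>] t₀, 2 * (w s * P s) - (B + K) * w s ^ 2 ≤ f s ^ 2 := by
  refine eventually_le_of_hasDerivAt_le
    (φ' := fun s => 2 * (f s / w s * P s + w s * P' s) - (B + K) * (2 * f s))
    (ψ' := fun s => 2 * (f s / w s * h s)) ?_ ?_ ?_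
    (by simpa using ((hw₀.mul hP₀).const_mul 2).sub ((hw₀.pow 2).const_mul (B + K)))
    (by simpa using hf₀.pow 2)
  · filter_upwards [hw, hw', hP'] with s hws hw's hP's
    exact (((hw's.fun_mul hP's).const_mul 2).sub ((hw's.fun_pow 2).const_mul (B + K))).congr_deriv
      (by field_simp; ring)
  · filter_upwards [hf'] with s hs
    exact (hs.fun_pow 2).congr_deriv (by push_cast; ring)
  · filter_upwards [hw, hf, hPh, hP'f] with s hws hfs hPhs hP'fs
    have hprod : f s / w s * P s - B * f s ≤ f s / w s * h s :=
      calc f s / w s * P s - B * f s = f s / w s * (P s - B * w s) := by field_simp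
        _ ≤ f s / w s * h s := by gcongr
    linarith

theorem eventually_sqrt_pow_three_le {K : ℝ} (hw : ∀ᶠ s in 𝓝[>] t₀, 0 < w s)
    (hfw : ∀ᶠ s in 𝓝[>] t₀, f s ≤ K * √(w s))
    (hw' : ∀ᶠ s in 𝓝[>] t₀, HasDerivAt w (f s / w s) s) (hw₀ : Tendsto w (𝓝[>] t₀) (𝓝 0)) :
    ∀ᶠ s in 𝓝[>] t₀, √(w s) ^ 3 ≤ 3 / 2 * K * (s - t₀) := by
  have hid : Tendsto (fun s => s) (𝓝[>] t₀) (𝓝 t₀) := nhdsWithin_le_nhds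
  refine eventually_le_of_hasDerivAt_le (φ' := fun s => 3 / 2 * (f s / √(w s)))
    (ψ' := fun _ => 3 / 2 * K) ?_ (.of_forall fun s => ?_) ?_
    (by simpa using hw₀.sqrt.pow 3) (by simpa using (hid.sub_const t₀).const_mul (3 / 2 * K))
  · filter_upwards [hw, hw'] with s hws hw's
    refine ((hw's.sqrt hws.ne').fun_pow 3).congr_deriv ?_
    simp only [Nat.add_one_sub_one, Nat.cast_ofNat, Real.sq_sqrt hws.le]
    field_simp [(Real.sqrt_pos.2 hws).ne']
  · simpa using ((hasDerivAt_id s).sub_const t₀).const_mul (3 / 2 * K)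
  · filter_upwards [hw, hfw] with s hws hfws
    gcongr
    exact (div_le_iff₀ (Real.sqrt_pos.2 hws)).2 hfws

end SingularSystem

/-! ### Quadratic forms and matrix fields -/

section BilinForm

variable {F : Type*} [AddCommGroup F] [Module ℝ F] {B : LinearMap.BilinForm ℝ F}

variable (B) in
/-- The vector `v / ‖v‖` for the seminorm `‖v‖ = √(B v v)`; it is `0` when `B v v ≤ 0`. -/
def bilinNormalize (v : F) : F := (√(B v v))⁻¹ • v

theorem apply_bilinNormalize (v u : F) :
    B (bilinNormalize B v) (bilinNormalize B u) = B v u / (√(B v v) * √(B u u)) := by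
  simp only [bilinNormalize, map_smul, LinearMap.smul_apply, smul_eq_mul]
  ring

theorem apply_bilinNormalize_self_le_one {v : F} (hv : 0 ≤ B v v) :
    B (bilinNormalize B v) (bilinNormalize B v) ≤ 1 := by
  rw [apply_bilinNormalize, Real.mul_self_sqrt hv]
  exact div_self_le_one _

theorem apply_bilinNormalize_self {v : F} (hv : 0 < B v v) :
    B (bilinNormalize B v) (bilinNormalize B v) = 1 := by
  rw [apply_bilinNormalize, Real.mul_self_sqrt hv.le, div_self hv.ne']

theorem apply_add_self (hB : B.IsSymm) (v u : F) :
    B (v + u) (v + u) = B v v + 2 * B v u + B u u := by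
  simp only [map_add, LinearMap.add_apply, hB.eq u v]
  ring

theorem apply_add_self_le_of_apply_self_le (hB : B.IsPosSemidef) {v u : F} {r : ℝ}
    (hv : B v v ≤ r) (hu : B u u ≤ r) : B (v + u) (v + u) ≤ 4 * r := by
  have hsub : 0 ≤ B (v + -u) (v + -u) := hB.nonneg _
  rw [apply_add_self hB.isSymm] at hsub ⊢
  simp only [map_neg, LinearMap.neg_apply, neg_neg] at hsub
  linarith

/-- With `ρ = -cos ∠(v, u) ∈ [0, 1]`, the left side is `2 (1 - ρ)` and the right side is
`2 (1 - ρ ^ 2)`. -/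
theorem apply_bilinNormalize_add_self_le (hB : B.IsPosSemidef) {v u : F}
    (hv : 0 < B v v) (hu : 0 < B u u) (hvu : B v u ≤ 0) :
    B (bilinNormalize B v + bilinNormalize B u) (bilinNormalize B v + bilinNormalize B u)
      ≤ 2 * (1 - B v u ^ 2 / (B v v * B u u)) := by
  rw [apply_add_self hB.isSymm, apply_bilinNormalize_self hv, apply_bilinNormalize_self hu,
    apply_bilinNormalize]
  set ρ : ℝ := -(B v u / (√(B v v) * √(B u u))) with hρ
  have hρ_sq : ρ ^ 2 = B v u ^ 2 / (B v v * B u u) := by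
    rw [hρ, neg_sq, div_pow, mul_pow, Real.sq_sqrt hv.le, Real.sq_sqrt hu.le]
  have hρ_nonneg : 0 ≤ ρ := neg_nonneg.2 (div_nonpos_of_nonpos_of_nonneg hvu (by positivity))
  have hρ_le : ρ ≤ 1 := by
    rw [← sq_le_one_iff₀ hρ_nonneg, hρ_sq]
    exact div_le_one_of_le₀
      (LinearMap.BilinForm.apply_sq_le_of_symm B hB.nonneg ⟨hB.eq⟩ v u) (by positivity)
  linarith [pow_le_of_le_one hρ_nonneg hρ_le two_ne_zero]

end BilinForm

theorem exists_abs_le_mul_of_homogeneous {X F : Type*} [TopologicalSpace X]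
    [NormedAddCommGroup F] [NormedSpace ℝ F] [ProperSpace F] {f q : X → F → ℝ} {K : Set X} {n : ℕ}
    (hn : n ≠ 0) (hK : IsCompact K)
    (hf : ContinuousOn (fun p : X × F => f p.1 p.2) (K ×ˢ Metric.sphere 0 1))
    (hq : ContinuousOn (fun p : X × F => q p.1 p.2) (K ×ˢ Metric.sphere 0 1))
    (hf_smul : ∀ x v (c : ℝ), f x (c • v) = c ^ n * f x v)
    (hq_smul : ∀ x v (c : ℝ), q x (c • v) = c ^ n * q x v)
    (hq_pos : ∀ x ∈ K, ∀ v ≠ 0, 0 < q x v) :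
    ∃ C > 0, ∀ x ∈ K, ∀ v, |f x v| ≤ C * q x v := by
  have hpos (p) (hp : p ∈ K ×ˢ Metric.sphere (0 : F) 1) : 0 < q p.1 p.2 :=
    hq_pos p.1 hp.1 p.2 (ne_zero_of_mem_unit_sphere ⟨p.2, hp.2⟩)
  obtain ⟨C, hC⟩ := (hK.prod (isCompact_sphere (0 : F) 1)).exists_bound_of_continuousOn
    (hf.div hq fun p hp => (hpos p hp).ne')
  refine ⟨max C 1, by positivity, fun x hx v => ?_⟩
  rcases eq_or_ne v 0 with rfl | hv
  · have hf_zero : f x 0 = 0 := by simpa [hn] using hf_smul x 0 0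
    have hq_zero : q x 0 = 0 := by simpa [hn] using hq_smul x 0 0
    simp [hf_zero, hq_zero]
  obtain ⟨u, hu, hvu⟩ : ∃ u ∈ Metric.sphere (0 : F) 1, v = ‖v‖ • u :=
    ⟨‖v‖⁻¹ • v, by simp [norm_smul, hv], by simp [smul_smul, hv]⟩
  have hqu : 0 < q x u := hpos (x, u) ⟨hx, hu⟩
  have hfu : |f x u| ≤ max C 1 * q x u := by
    rw [← div_le_iff₀ hqu, ← abs_of_pos hqu, ← abs_div]
    exact (hC (x, u) ⟨hx, hu⟩).trans (le_max_left C 1)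
  rw [hvu, hf_smul, hq_smul, abs_mul, abs_of_nonneg (by positivity : 0 ≤ ‖v‖ ^ n), mul_left_comm]
  gcongr

section MatrixField

variable {𝕜 F ι : Type*} [NontriviallyNormedField 𝕜] [NormedAddCommGroup F] [NormedSpace 𝕜 F]
  [Fintype ι] [DecidableEq ι] {n : WithTop ℕ∞} {A : F → Matrix ι ι 𝕜} {U : Set F}

theorem contDiffOn_matrix_det (hA : ∀ i j, ContDiffOn 𝕜 n (fun x => A x i j) U) :
    ContDiffOn 𝕜 n (fun x => (A x).det) U := by
  simp only [det_apply]
  exact ContDiffOn.sum fun σ _ => (contDiffOn_prod fun k _ => hA _ _).const_smul _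

theorem contDiffOn_matrix_inv_apply (hA : ∀ i j, ContDiffOn 𝕜 n (fun x => A x i j) U)
    (hdet : ∀ x ∈ U, (A x).det ≠ 0) (i j : ι) : ContDiffOn 𝕜 n (fun x => (A x)⁻¹ i j) U := by
  have hcramer (x) : (A x)⁻¹ i j = (A x).det⁻¹ * ((A x).updateRow j (Pi.single i 1)).det := by
    rw [inv_def, Matrix.smul_apply, adjugate_apply, Ring.inverse_eq_inv', smul_eq_mul]
  simp only [hcramer]
  refine ((contDiffOn_matrix_det hA).inv hdet).mul (contDiffOn_matrix_det fun k l => ?_)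
  rcases eq_or_ne k j with rfl | hk
  · simpa only [updateRow_self] using contDiffOn_const
  · simpa only [updateRow_ne hk] using hA k l

end MatrixField

theorem continuousOn_quadratic {X ι : Type*} [TopologicalSpace X] [Fintype ι]
    {A : X → Matrix ι ι ℝ} {U : Set X} (hA : ∀ i j, ContinuousOn (fun x => A x i j) U) :
    ContinuousOn (fun p : X × (ι → ℝ) => ∑ i, ∑ j, A p.1 i j * p.2 i * p.2 j) (U ×ˢ univ) := by
  refine continuousOn_finsetSum _ fun i _ => continuousOn_finsetSum _ fun j _ => ?_
  have hAU : ContinuousOn (fun p : X × (ι → ℝ) => A p.1 i j) (U ×ˢ univ) :=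
    (hA i j).comp continuousOn_fst fun p hp => hp.1
  exact (hAU.mul (by fun_prop)).mul (by fun_prop)

theorem dotProduct_euclGrad (V : Vec N → ℝ) (x v : Vec N) :
    v ⬝ᵥ euclGrad V x = fderiv ℝ V x v := by
  conv_rhs => rw [pi_eq_sum_univ' v, map_sum]
  simp only [dotProduct, euclGrad, map_smul, smul_eq_mul]

namespace Setting

variable (S : Setting N)

/-- The metric tensor at `x` as a bilinear form, giving `Setting.prod` the bilinear form API. -/
def metric (x : Vec N) : LinearMap.BilinForm ℝ (Vec N) := Matrix.toBilin' (S.g x)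

theorem metric_apply (x v w : Vec N) : S.metric x v w = S.prod x v w := by
  simp only [metric, toBilin'_apply, prod, gP]
  exact Finset.sum_congr rfl fun i _ => Finset.sum_congr rfl fun j _ => by ring

variable {S} in
theorem metric_isPosSemidef {x : Vec N} (hx : x ∈ S.U) : (S.metric x).IsPosSemidef where
  eq v w := by
    simp only [metric_apply, prod, gP]
    rw [Finset.sum_comm]
    exact Finset.sum_congr rfl fun i _ => Finset.sum_congr rfl fun j _ => by
      rw [S.hgsymm x hx j i]; ring
  nonneg v := by
    rcases eq_or_ne v 0 with rfl | hv
    · simp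
    · exact S.metric_apply x v v ▸ (S.hgpos x hx v hv).le

theorem prod_smul_self (x v : Vec N) (c : ℝ) :
    S.prod x (c • v) (c • v) = c ^ 2 * S.prod x v v := by
  simp only [← metric_apply, map_smul, LinearMap.smul_apply, smul_eq_mul]
  ring

variable {S} in
theorem det_g_ne_zero {x : Vec N} (hx : x ∈ S.U) : (S.g x).det ≠ 0 := by
  intro hdet
  obtain ⟨v, hv, hgv⟩ := exists_mulVec_eq_zero_iff.2 hdet
  refine (S.hgpos x hx v hv).ne' ?_
  rw [← prod, ← metric_apply, metric, toBilin'_apply', hgv, dotProduct_zero]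

variable {S} in
theorem prod_grad {x : Vec N} (hx : x ∈ S.U) (v : Vec N) :
    S.prod x v (S.grad x) = fderiv ℝ S.V x v := by
  rw [← metric_apply, metric, toBilin'_apply', grad, mulVec_mulVec,
    mul_nonsing_inv _ (det_g_ne_zero hx).isUnit, one_mulVec, dotProduct_euclGrad]

theorem contDiffOn_fderiv_V : ContDiffOn ℝ 1 (fderiv ℝ S.V) S.U :=
  S.hVC.fderiv_of_isOpen S.hU one_add_one_eq_two.le

theorem contDiffOn_grad : ContDiffOn ℝ 1 S.grad S.U := by
  refine contDiffOn_pi.2 fun i => ?_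
  simp only [grad, mulVec, dotProduct]
  refine ContDiffOn.sum fun j _ => ?_
  have hinv : ContDiffOn ℝ 3 (fun x => (S.g x)⁻¹ i j) S.U :=
    contDiffOn_matrix_inv_apply S.hgC (fun x hx => det_g_ne_zero hx) i j
  exact (hinv.of_le (by norm_num)).mul (S.contDiffOn_fderiv_V.clm_apply contDiffOn_const)

/-- The squared length `‖∇V‖²` of the gradient. -/
def gradNormSq (x : Vec N) : ℝ := S.prod x (S.grad x) (S.grad x)

theorem contDiffOn_gradNormSq : ContDiffOn ℝ 1 S.gradNormSq S.U :=
  (S.contDiffOn_fderiv_V.clm_apply S.contDiffOn_grad).congr fun _ hx => prod_grad hx _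

variable {S} in
theorem gradNormSq_pos {x : Vec N} (hx : S.V x = S.E) : 0 < S.gradNormSq x := by
  have hU : x ∈ S.U := S.hsub hx.le
  refine S.hgpos x hU _ fun hgrad => S.hreg x hx (funext fun i => ?_)
  rw [euclGrad, ← prod_grad hU, hgrad, ← metric_apply, map_zero, Pi.zero_apply]

/-- The quadratic part `Γ(v, v)` of the geodesic equation, so that `Dẋ/ds = ẍ + Γ(ẋ, ẋ)`. -/
def christoffelForm (x v : Vec N) : Vec N :=
  fun k => ∑ i, ∑ j, S.christoffel x k i j * v i * v j

theorem continuousOn_christoffel (k i j : Fin N) :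
    ContinuousOn (fun x => S.christoffel x k i j) S.U := by
  have hdg (p q m) : ContinuousOn (fun x => fderiv ℝ (fun y => S.g y p q) x (Pi.single m 1)) S.U :=
    ((S.hgC p q).continuousOn_fderiv_of_isOpen S.hU (by norm_num)).clm_apply continuousOn_const
  have hinv (l) : ContinuousOn (fun x => (S.g x)⁻¹ k l) S.U :=
    (contDiffOn_matrix_inv_apply S.hgC (fun x hx => det_g_ne_zero hx) k l).continuousOn
  exact continuousOn_const.mul <| continuousOn_finsetSum _ fun l _ =>
    (hinv l).mul (((hdg l j i).add (hdg l i j)).sub (hdg i j l))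

/-- The covariant Hessian of `V` as a quadratic form, `d²V(v, v) - dV(Γ(v, v))`. -/
def hessForm (x v : Vec N) : ℝ :=
  fderiv ℝ (fderiv ℝ S.V) x v v - fderiv ℝ S.V x (S.christoffelForm x v)

theorem hessForm_smul (x v : Vec N) (c : ℝ) :
    S.hessForm x (c • v) = c ^ 2 * S.hessForm x v := by
  have hΓ : S.christoffelForm x (c • v) = c ^ 2 • S.christoffelForm x v := by
    ext k
    simp only [christoffelForm, Pi.smul_apply, smul_eq_mul, Finset.mul_sum]
    exact Finset.sum_congr rfl fun i _ => Finset.sum_congr rfl fun j _ => by ring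
  simp only [hessForm, hΓ, map_smul, _root_.smul_apply, smul_eq_mul]
  ring

theorem continuousOn_hessForm :
    ContinuousOn (fun p : Vec N × Vec N => S.hessForm p.1 p.2) (S.U ×ˢ univ) := by
  have hfst : MapsTo (Prod.fst : Vec N × Vec N → Vec N) (S.U ×ˢ univ) S.U := fun p hp => hp.1
  have hΓ : ContinuousOn (fun p : Vec N × Vec N => S.christoffelForm p.1 p.2) (S.U ×ˢ univ) :=
    continuousOn_pi.2 fun k => continuousOn_quadratic (A := fun x => of (S.christoffel x k))
      (S.continuousOn_christoffel k)
  have hdV : ContinuousOn (fun p : Vec N × Vec N => fderiv ℝ S.V p.1) (S.U ×ˢ univ) :=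
    S.contDiffOn_fderiv_V.continuousOn.comp continuousOn_fst hfst
  have hddV : ContinuousOn (fun p : Vec N × Vec N => fderiv ℝ (fderiv ℝ S.V) p.1) (S.U ×ˢ univ) :=
    (S.contDiffOn_fderiv_V.continuousOn_fderiv_of_isOpen S.hU le_rfl).comp continuousOn_fst hfst
  exact ((hddV.clm_apply continuousOn_snd).clm_apply continuousOn_snd).sub (hdV.clm_apply hΓ)

theorem exists_abs_le_mul_prod_self {f : Vec N → Vec N → ℝ}
    (hf : ContinuousOn (fun p : Vec N × Vec N => f p.1 p.2) (S.U ×ˢ univ))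
    (hf_smul : ∀ x v (c : ℝ), f x (c • v) = c ^ 2 * f x v) :
    ∃ C > 0, ∀ x, S.V x ≤ S.E → ∀ v, |f x v| ≤ C * S.prod x v v := by
  have hsub : {x | S.V x ≤ S.E} ×ˢ Metric.sphere 0 1 ⊆ S.U ×ˢ (univ : Set (Vec N)) :=
    prod_mono S.hsub (subset_univ _)
  exact exists_abs_le_mul_of_homogeneous two_ne_zero S.hcomp (hf.mono hsub)
    ((continuousOn_quadratic (A := S.g) fun i j => (S.hgC i j).continuousOn).mono hsub) hf_smul
    S.prod_smul_self fun x hx => S.hgpos x (S.hsub hx)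

theorem exists_sq_fderiv_le_mul_prod_self {F : Vec N → ℝ} (hF : ContDiffOn ℝ 1 F S.U) :
    ∃ C > 0, ∀ x, S.V x ≤ S.E → ∀ v, fderiv ℝ F x v ^ 2 ≤ C * S.prod x v v := by
  have hcont : ContinuousOn (fun p : Vec N × Vec N => fderiv ℝ F p.1 p.2 ^ 2) (S.U ×ˢ univ) :=
    (((hF.continuousOn_fderiv_of_isOpen S.hU le_rfl).comp continuousOn_fst
      fun p hp => hp.1).clm_apply continuousOn_snd).pow 2
  simpa only [abs_sq] using S.exists_abs_le_mul_prod_self (f := fun x v => fderiv ℝ F x v ^ 2)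
    hcont fun x v c => by rw [map_smul, smul_eq_mul, mul_pow]

end Setting

/-! ### Geodesics issuing from the boundary of the well -/

namespace Setting

section Curve

variable (S : Setting N) (γ : ℝ → Vec N) (s : ℝ)

/-- The gap `E - V(γ)`, which is twice the conformal factor of the Jacobi metric along `γ`. -/
def gap : ℝ := S.E - S.V (γ s)

/-- The normal momentum `-(E - V(γ)) dV(γ̇)`. Along an arclength-parameterized geodesic it stays
bounded although `γ̇` blows up at the boundary of the well. -/
def momentum : ℝ := -(S.gap γ s * fderiv ℝ S.V (γ s) (deriv γ s))

/-- The numerator `‖∇V‖² - (E - V)² Hess V(γ̇, γ̇)` of the derivative of `momentum`. -/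
def momentumSource : ℝ :=
  S.gradNormSq (γ s) - S.gap γ s ^ 2 * S.hessForm (γ s) (deriv γ s)

/-- The error term `Σ = γ̇/‖γ̇‖ + ∇V/‖∇V‖`. -/
def normalDeviation : Vec N :=
  (S.gnorm (γ s) (deriv γ s))⁻¹ • deriv γ s + (S.gnorm (γ s) (S.grad (γ s)))⁻¹ • S.grad (γ s)

theorem normalDeviation_eq_bilinNormalize_add : S.normalDeviation γ s =
    bilinNormalize (S.metric (γ s)) (deriv γ s)
      + bilinNormalize (S.metric (γ s)) (S.grad (γ s)) := by
  simp only [normalDeviation, bilinNormalize, gnorm, metric_apply]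

end Curve

namespace IsBdryGeo

variable {S : Setting N} {γ : ℝ → Vec N} {a s : ℝ}

theorem eventually {p : ℝ → Prop} (hγ : S.IsBdryGeo γ a) (hp : ∀ {s}, s ∈ Ioc 0 a → p s) :
    ∀ᶠ s in 𝓝[>] 0, p s :=
  mem_of_superset (Ioc_mem_nhdsGT hγ.1) fun _ => hp

theorem gap_pos (hγ : S.IsBdryGeo γ a) (hs : s ∈ Ioc 0 a) : 0 < S.gap γ s :=
  sub_pos.2 (hγ.2.2.2.2.1 s hs)

theorem potential_le (hγ : S.IsBdryGeo γ a) (hs : s ∈ Ioc 0 a) : S.V (γ s) ≤ S.E :=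
  (sub_pos.1 (hγ.gap_pos hs)).le

theorem mem_U (hγ : S.IsBdryGeo γ a) (hs : s ∈ Ioc 0 a) : γ s ∈ S.U :=
  S.hsub (hγ.potential_le hs)

theorem metric_deriv_self (hγ : S.IsBdryGeo γ a) (hs : s ∈ Ioc 0 a) :
    S.metric (γ s) (deriv γ s) (deriv γ s) = 2 / S.gap γ s := by
  have harc : 1 / 2 * S.prod (γ s) (deriv γ s) (deriv γ s) * S.gap γ s = 1 :=
    hγ.2.2.2.2.2.2 s hs
  rw [metric_apply, eq_div_iff (hγ.gap_pos hs).ne']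
  linarith

theorem hasDerivAt_comp {G : Type*} [NormedAddCommGroup G] [NormedSpace ℝ G] {F : Vec N → G}
    (hγ : S.IsBdryGeo γ a) (hF : ContDiffOn ℝ 1 F S.U) (hs : s ∈ Ioc 0 a) :
    HasDerivAt (fun t => F (γ t)) (fderiv ℝ F (γ s) (deriv γ s)) s := by
  have hF' : DifferentiableAt ℝ F (γ s) :=
    (hF.contDiffAt (S.hU.mem_nhds (hγ.mem_U hs))).differentiableAt one_ne_zero
  exact hF'.hasFDerivAt.comp_hasDerivAt s
    ((hγ.2.2.1 s hs).differentiableAt two_ne_zero).hasDerivAt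

theorem hasDerivAt_deriv (hγ : S.IsBdryGeo γ a) (hs : s ∈ Ioc 0 a) :
    HasDerivAt (deriv γ) (deriv (deriv γ) s) s :=
  (((hγ.2.2.1 s hs).derivWithin one_add_one_eq_two.le).differentiableAt one_ne_zero).hasDerivAt

theorem tendsto_comp {G : Type*} [TopologicalSpace G] {F : Vec N → G} (hγ : S.IsBdryGeo γ a)
    (hF : ContinuousOn F S.U) :
    Tendsto (fun s => F (γ s)) (𝓝[>] 0) (𝓝 (F (γ 0))) := by
  have hγ₀ : Tendsto γ (𝓝[>] 0) (𝓝 (γ 0)) :=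
    ((hγ.2.1 0 (left_mem_Icc.2 hγ.1.le)).mono_of_mem_nhdsWithin
      (Icc_mem_nhdsGT hγ.1)).tendsto
  have hFγ : ContinuousAt F (γ 0) := hF.continuousAt (S.hU.mem_nhds (S.hsub hγ.2.2.2.1.le))
  exact hFγ.tendsto.comp hγ₀

theorem tendsto_gap (hγ : S.IsBdryGeo γ a) : Tendsto (S.gap γ) (𝓝[>] 0) (𝓝 0) := by
  have hlim := (hγ.tendsto_comp S.hVC.continuousOn).const_sub S.E
  rwa [hγ.2.2.2.1, sub_self] at hlim

theorem gradNormSq_zero_pos (hγ : S.IsBdryGeo γ a) : 0 < S.gradNormSq (γ 0) :=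
  gradNormSq_pos hγ.2.2.2.1

theorem tendsto_gradNormSq (hγ : S.IsBdryGeo γ a) :
    Tendsto (fun s => S.gradNormSq (γ s)) (𝓝[>] 0) (𝓝 (S.gradNormSq (γ 0))) :=
  hγ.tendsto_comp S.contDiffOn_gradNormSq.continuousOn

theorem geodesic_equation (hγ : S.IsBdryGeo γ a) (hs : s ∈ Ioc 0 a) :
    S.gap γ s • (deriv (deriv γ) s + S.christoffelForm (γ s) (deriv γ s))
      - fderiv ℝ S.V (γ s) (deriv γ s) • deriv γ s + (S.gap γ s)⁻¹ • S.grad (γ s) = 0 := by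
  ext k
  have hgeo := hγ.2.2.2.2.2.1 s hs k
  have hsymm : S.prod (γ s) (S.grad (γ s)) (deriv γ s) = fderiv ℝ S.V (γ s) (deriv γ s) := by
    rw [← prod_grad (hγ.mem_U hs), ← metric_apply, ← metric_apply]
    exact (metric_isPosSemidef (hγ.mem_U hs)).isSymm.eq _ _
  have harc : 1 / 2 * S.prod (γ s) (deriv γ s) (deriv γ s) = (S.gap γ s)⁻¹ := by
    rw [← metric_apply, hγ.metric_deriv_self hs]
    ring
  rwa [hsymm, harc] at hgeo

theorem hasDerivAt_gap (hγ : S.IsBdryGeo γ a) (hs : s ∈ Ioc 0 a) :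
    HasDerivAt (S.gap γ) (S.momentum γ s / S.gap γ s) s := by
  refine ((hγ.hasDerivAt_comp (S.hVC.of_le one_le_two) hs).const_sub S.E).congr_deriv ?_
  rw [momentum, ← mul_neg, mul_div_cancel_left₀ _ (hγ.gap_pos hs).ne']

theorem hasDerivAt_momentum (hγ : S.IsBdryGeo γ a) (hs : s ∈ Ioc 0 a) :
    HasDerivAt (S.momentum γ) (S.momentumSource γ s / S.gap γ s) s := by
  have hgap : S.gap γ s ≠ 0 := (hγ.gap_pos hs).ne'
  have hgrad : fderiv ℝ S.V (γ s) (S.grad (γ s)) = S.gradNormSq (γ s) :=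
    (prod_grad (hγ.mem_U hs) _).symm
  have hgeo := congrArg (fderiv ℝ S.V (γ s)) (hγ.geodesic_equation hs)
  simp only [map_add, map_sub, map_smul, smul_eq_mul, map_zero, hgrad] at hgeo
  refine ((hγ.hasDerivAt_gap hs).mul ((hγ.hasDerivAt_comp S.contDiffOn_fderiv_V hs).clm_apply
    (hγ.hasDerivAt_deriv hs))).neg.congr_deriv ?_
  simp only [momentumSource, hessForm, momentum]
  field_simp at hgeo ⊢
  linear_combination -hgeo

theorem momentum_sq_le (hγ : S.IsBdryGeo γ a) (hs : s ∈ Ioc 0 a) :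
    S.momentum γ s ^ 2 ≤ 2 * S.gap γ s * S.gradNormSq (γ s) := by
  have hg := metric_isPosSemidef (hγ.mem_U hs)
  have hCS := LinearMap.BilinForm.apply_sq_le_of_symm _ hg.nonneg ⟨hg.eq⟩
    (deriv γ s) (S.grad (γ s))
  rw [hγ.metric_deriv_self hs, metric_apply, metric_apply, prod_grad (hγ.mem_U hs)] at hCS
  calc S.momentum γ s ^ 2 = S.gap γ s ^ 2 * fderiv ℝ S.V (γ s) (deriv γ s) ^ 2 := by
        rw [momentum, neg_sq, mul_pow]
    _ ≤ S.gap γ s ^ 2 * (2 / S.gap γ s * S.gradNormSq (γ s)) := by gcongr; exact hCS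
    _ = 2 * S.gap γ s * S.gradNormSq (γ s) := by
        have := hγ.gap_pos hs
        field_simp

theorem tendsto_momentum (hγ : S.IsBdryGeo γ a) :
    Tendsto (S.momentum γ) (𝓝[>] 0) (𝓝 0) := by
  have hbound : Tendsto (fun s => 2 * S.gap γ s * S.gradNormSq (γ s)) (𝓝[>] 0) (𝓝 0) := by
    simpa using (hγ.tendsto_gap.const_mul 2).mul hγ.tendsto_gradNormSq
  exact squeeze_zero_norm' (hγ.eventually fun hs => Real.abs_le_sqrt (hγ.momentum_sq_le hs))
    (by simpa using hbound.sqrt)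

theorem exists_abs_gap_sq_mul_hessForm_le (hγ : S.IsBdryGeo γ a) :
    ∃ B ≥ 0, ∀ s ∈ Ioc 0 a,
      |S.gap γ s ^ 2 * S.hessForm (γ s) (deriv γ s)| ≤ B * S.gap γ s := by
  obtain ⟨C, hC, hHess⟩ := S.exists_abs_le_mul_prod_self S.continuousOn_hessForm S.hessForm_smul
  refine ⟨2 * C, by positivity, fun s hs => ?_⟩
  have hgap := hγ.gap_pos hs
  have hs' := hHess (γ s) (hγ.potential_le hs) (deriv γ s)
  rw [← metric_apply, hγ.metric_deriv_self hs] at hs'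
  calc |S.gap γ s ^ 2 * S.hessForm (γ s) (deriv γ s)|
      = S.gap γ s ^ 2 * |S.hessForm (γ s) (deriv γ s)| := by
        rw [abs_mul, abs_of_nonneg (by positivity)]
    _ ≤ S.gap γ s ^ 2 * (C * (2 / S.gap γ s)) := by gcongr
    _ = 2 * C * S.gap γ s := by field_simp

theorem exists_gap_mul_sq_fderiv_le {F : Vec N → ℝ} (hγ : S.IsBdryGeo γ a)
    (hF : ContDiffOn ℝ 1 F S.U) :
    ∃ C, ∀ s ∈ Ioc 0 a, S.gap γ s * fderiv ℝ F (γ s) (deriv γ s) ^ 2 ≤ C := by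
  obtain ⟨C, hC, hdF⟩ := S.exists_sq_fderiv_le_mul_prod_self hF
  refine ⟨2 * C, fun s hs => ?_⟩
  have hgap := hγ.gap_pos hs
  have hs' := hdF (γ s) (hγ.potential_le hs) (deriv γ s)
  rw [← metric_apply, hγ.metric_deriv_self hs] at hs'
  calc S.gap γ s * fderiv ℝ F (γ s) (deriv γ s) ^ 2
      ≤ S.gap γ s * (C * (2 / S.gap γ s)) := by gcongr
    _ = 2 * C := by field_simp

theorem tendsto_momentumSource (hγ : S.IsBdryGeo γ a) :
    Tendsto (S.momentumSource γ) (𝓝[>] 0) (𝓝 (S.gradNormSq (γ 0))) := by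
  obtain ⟨B, -, hB⟩ := hγ.exists_abs_gap_sq_mul_hessForm_le
  have hHess : Tendsto (fun s => S.gap γ s ^ 2 * S.hessForm (γ s) (deriv γ s)) (𝓝[>] 0) (𝓝 0) :=
    squeeze_zero_norm' (hγ.eventually (hB _)) (by simpa using hγ.tendsto_gap.const_mul B)
  have hlim := hγ.tendsto_gradNormSq.sub hHess
  rwa [sub_zero] at hlim

theorem eventually_momentum_nonneg (hγ : S.IsBdryGeo γ a) :
    ∀ᶠ s in 𝓝[>] 0, 0 ≤ S.momentum γ s :=
  eventually_nonneg_of_hasDerivAt_div (hγ.eventually hγ.gap_pos)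
    (hγ.tendsto_momentumSource.eventually_const_le hγ.gradNormSq_zero_pos)
    (hγ.eventually hγ.hasDerivAt_momentum) hγ.tendsto_momentum

theorem eventually_mul_gap_le_momentum_sq (hγ : S.IsBdryGeo γ a) {m : ℝ}
    (hm : m < S.gradNormSq (γ 0)) : ∀ᶠ s in 𝓝[>] 0, 2 * m * S.gap γ s ≤ S.momentum γ s ^ 2 :=
  eventually_two_mul_mul_le_sq (hγ.eventually hγ.gap_pos)
    (hγ.tendsto_momentumSource.eventually_const_le hm) hγ.eventually_momentum_nonneg
    (hγ.eventually hγ.hasDerivAt_gap) (hγ.eventually hγ.hasDerivAt_momentum)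
    hγ.tendsto_gap hγ.tendsto_momentum

theorem exists_eventually_two_mul_sub_le_momentum_sq (hγ : S.IsBdryGeo γ a) :
    ∃ A ≥ 0, ∀ᶠ s in 𝓝[>] 0,
      2 * (S.gap γ s * S.gradNormSq (γ s)) - A * S.gap γ s ^ 2 ≤ S.momentum γ s ^ 2 := by
  obtain ⟨B, hB₀, hB⟩ := hγ.exists_abs_gap_sq_mul_hessForm_le
  obtain ⟨C, hC⟩ := hγ.exists_gap_mul_sq_fderiv_le S.contDiffOn_gradNormSq
  obtain ⟨m, hm₀, hm⟩ := exists_between hγ.gradNormSq_zero_pos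
  refine ⟨B + √(C / (2 * m)), by positivity, eventually_two_mul_mul_sub_le_sq
    (hγ.eventually hγ.gap_pos) hγ.eventually_momentum_nonneg (hγ.eventually fun hs => ?_) ?_
    (hγ.eventually hγ.hasDerivAt_gap) (hγ.eventually hγ.hasDerivAt_momentum)
    (hγ.eventually fun hs => hγ.hasDerivAt_comp S.contDiffOn_gradNormSq hs)
    hγ.tendsto_gap hγ.tendsto_momentum hγ.tendsto_gradNormSq⟩
  · exact sub_le_sub_left ((le_abs_self _).trans (hB _ hs)) _
  · filter_upwards [hγ.eventually_momentum_nonneg, hγ.eventually_mul_gap_le_momentum_sq hm,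
      hγ.eventually hγ.gap_pos, hγ.eventually (hC _)] with s hmom hsq hgap hCs
    exact mul_le_sqrt_mul_of_sq_le hm₀ hgap.le hmom hCs hsq

theorem exists_eventually_sqrt_gap_le (hγ : S.IsBdryGeo γ a) :
    ∃ K, ∀ᶠ s in 𝓝[>] 0, √(S.gap γ s) ≤ K * s ^ ((1 : ℝ) / 3) := by
  have hP₀ : 0 < S.gradNormSq (γ 0) := hγ.gradNormSq_zero_pos
  set M : ℝ := 2 * (S.gradNormSq (γ 0) + 1)
  have hM₀ : 0 ≤ M := by positivity
  have hP : ∀ᶠ s in 𝓝[>] 0, S.gradNormSq (γ s) ≤ S.gradNormSq (γ 0) + 1 :=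
    hγ.tendsto_gradNormSq.eventually_le_const (lt_add_one _)
  have hmom : ∀ᶠ s in 𝓝[>] 0, S.momentum γ s ≤ √M * √(S.gap γ s) := by
    filter_upwards [hP, hγ.eventually hγ.gap_pos, hγ.eventually hγ.momentum_sq_le]
      with s hPs hgap hsq
    rw [← Real.sqrt_mul hM₀]
    refine Real.le_sqrt_of_sq_le (hsq.trans ?_)
    calc 2 * S.gap γ s * S.gradNormSq (γ s) ≤ 2 * S.gap γ s * (S.gradNormSq (γ 0) + 1) := by
          gcongr
      _ = M * S.gap γ s := by ring
  refine ⟨(3 / 2 * √M) ^ ((1 : ℝ) / 3), ?_⟩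
  filter_upwards [self_mem_nhdsWithin, eventually_sqrt_pow_three_le (hγ.eventually hγ.gap_pos) hmom
    (hγ.eventually hγ.hasDerivAt_gap) hγ.tendsto_gap] with s hs hcube
  rw [sub_zero] at hcube
  rw [← Real.mul_rpow (by positivity) (le_of_lt hs), one_div]
  exact le_rpow_inv_of_pow_le three_ne_zero (Real.sqrt_nonneg _) hcube

theorem gnorm_normalDeviation_le_two (hγ : S.IsBdryGeo γ a) (hs : s ∈ Ioc 0 a) :
    S.gnorm (γ s) (S.normalDeviation γ s) ≤ 2 := by
  have hg := metric_isPosSemidef (hγ.mem_U hs)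
  rw [gnorm, ← metric_apply, normalDeviation_eq_bilinNormalize_add, Real.sqrt_le_left two_pos.le]
  refine (apply_add_self_le_of_apply_self_le hg (apply_bilinNormalize_self_le_one (hg.nonneg _))
    (apply_bilinNormalize_self_le_one (hg.nonneg _))).trans ?_
  norm_num

theorem prod_normalDeviation_self_le (hγ : S.IsBdryGeo γ a) (hs : s ∈ Ioc 0 a)
    (hP : 0 < S.gradNormSq (γ s)) (hmom : 0 ≤ S.momentum γ s) :
    S.prod (γ s) (S.normalDeviation γ s) (S.normalDeviation γ s)
      ≤ 2 - S.momentum γ s ^ 2 / (S.gap γ s * S.gradNormSq (γ s)) := by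
  have hgap := hγ.gap_pos hs
  have hspeed := hγ.metric_deriv_self hs
  have hdV : S.metric (γ s) (deriv γ s) (S.grad (γ s)) = fderiv ℝ S.V (γ s) (deriv γ s) := by
    rw [metric_apply, prod_grad (hγ.mem_U hs)]
  have hgrad : S.metric (γ s) (S.grad (γ s)) (S.grad (γ s)) = S.gradNormSq (γ s) :=
    S.metric_apply _ _ _
  have hdV_nonpos : fderiv ℝ S.V (γ s) (deriv γ s) ≤ 0 :=
    nonpos_of_mul_nonpos_right (neg_nonneg.1 hmom) hgap
  rw [← metric_apply, normalDeviation_eq_bilinNormalize_add]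
  refine (apply_bilinNormalize_add_self_le (metric_isPosSemidef (hγ.mem_U hs))
    (hspeed ▸ by positivity) (hgrad ▸ hP) (hdV ▸ hdV_nonpos)).trans_eq ?_
  rw [hspeed, hgrad, hdV, momentum]
  field_simp

theorem exists_eventually_gnorm_normalDeviation_le (hγ : S.IsBdryGeo γ a) :
    ∃ C ≥ 0, ∀ᶠ s in 𝓝[>] 0, S.gnorm (γ s) (S.normalDeviation γ s) ≤ C * √(S.gap γ s) := by
  obtain ⟨A, hA₀, hA⟩ := hγ.exists_eventually_two_mul_sub_le_momentum_sq
  obtain ⟨m, hm₀, hm⟩ := exists_between hγ.gradNormSq_zero_pos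
  refine ⟨√(A / m), by positivity, ?_⟩
  filter_upwards [hA, hγ.tendsto_gradNormSq.eventually_const_le hm, hγ.eventually hγ.gap_pos,
    hγ.eventually_momentum_nonneg, hγ.eventually hγ.prod_normalDeviation_self_le]
    with s hAs hPm hgap hmom hdev
  have hP : 0 < S.gradNormSq (γ s) := hm₀.trans_le hPm
  rw [gnorm, ← Real.sqrt_mul' _ hgap.le]
  refine Real.sqrt_le_sqrt ?_
  calc S.prod (γ s) (S.normalDeviation γ s) (S.normalDeviation γ s)
      ≤ 2 - S.momentum γ s ^ 2 / (S.gap γ s * S.gradNormSq (γ s)) := hdev hP hmom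
    _ ≤ 2 - (2 * (S.gap γ s * S.gradNormSq (γ s)) - A * S.gap γ s ^ 2)
          / (S.gap γ s * S.gradNormSq (γ s)) := by gcongr
    _ = A / S.gradNormSq (γ s) * S.gap γ s := by field_simp; ring
    _ ≤ A / m * S.gap γ s := by gcongr

end IsBdryGeo

end Setting

/-- **Corollary 4.4**: along an arclength-parameterized `g_*`-geodesic starting at the
boundary of the well, `γ̇/‖γ̇‖ = −∇V(γ)/‖∇V(γ)‖ + Σ(s)` with `‖Σ(s)‖ ≤ C₀ s^{1/3}`. -/
theorem normal_behavior {N : ℕ} (S : Setting N) (γ : ℝ → Vec N) (a : ℝ)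
    (hγ : S.IsBdryGeo γ a) :
    ∃ C₀ > (0:ℝ), ∀ s ∈ Ioc (0:ℝ) a,
      S.gnorm (γ s)
        ((S.gnorm (γ s) (deriv γ s))⁻¹ • deriv γ s
          + (S.gnorm (γ s) (S.grad (γ s)))⁻¹ • S.grad (γ s)) ≤ C₀ * s ^ ((1:ℝ)/3) := by
  obtain ⟨C, hC₀, hC⟩ := hγ.exists_eventually_gnorm_normalDeviation_le
  obtain ⟨K, hK⟩ := hγ.exists_eventually_sqrt_gap_le
  refine exists_forall_le_mul_rpow (F := fun s => S.gnorm (γ s) (S.normalDeviation γ s))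
    (by norm_num) ⟨C * K, ?_⟩ fun s => hγ.gnorm_normalDeviation_le_two
  filter_upwards [hC, hK] with s hCs hKs
  calc S.gnorm (γ s) (S.normalDeviation γ s) ≤ C * √(S.gap γ s) := hCs
    _ ≤ C * (K * s ^ ((1:ℝ)/3)) := by gcongr
    _ = C * K * s ^ ((1:ℝ)/3) := by ring

end
end JacobiPaper
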